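/- Let a, b, c be positive integers. The map S³ → S given by (p, q, r) ↦ p·x^a y^b + q·x^a z^c − 2r·y^b z^c kills the vector (z^c, y^b, x^a) and hence descends to a well-defined S-linear map φ : R(a,b,c) → S. The image of φ is the ideal I = (x^a y^b, x^a z^c, y^b z^c) of S, and the kernel of φ is the cyclic submodule of R(a,b,c) generated by the class of (z^c, −y^b, 0); moreover this kernel is a free S-module of rank 1. In particular there is a short exact sequence 0 → S → R(a,b,c) → I → 0. -/

import Mathlib

/-!
The vector `(z^c, -y^b, 0)` generates the kernel because the variables are pairwise non-associated
primes.  If `p x^a y^b + q x^a z^c = 2 r y^b z^c`, then `x^a ∣ r`, say `r = x^a s`; cancelling `x^a`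
gives `p y^b + q z^c = 2 s y^b z^c`, so that `p = z^c t`, and then `q = y^b (2 s - t)`.  Hence
`(p, q, r) = s (z^c, y^b, x^a) + (t - s) (z^c, -y^b, 0)`, which is `exists_of_syzygy`.
The kernel is free on this generator because no nonzero multiple of it is a multiple of
`(z^c, y^b, x^a)`, as the third coordinate shows.  The image is the ideal `I` because `2` is a unit.
-/

open MvPolynomial

noncomputable section

/-- `S = ℂ[x,y,z]`. -/
abbrev S : Type := MvPolynomial (Fin 3) ℂ

/-- The cyclic submodule `N = ⟨(z^c, y^b, x^a)⟩ ⊆ S³`. -/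
abbrev Nsub (a b c : ℕ) : Submodule S (Fin 3 → S) :=
  Submodule.span S {![(X 2 : S) ^ c, (X 1 : S) ^ b, (X 0 : S) ^ a]}

/-- `R(a,b,c) = S³ / ⟨(z^c, y^b, x^a)⟩`. -/
abbrev Rabc (a b c : ℕ) : Type := (Fin 3 → S) ⧸ Nsub a b c

/-- Powers of a variable cancel from a divisibility against powers of the other variables. -/
lemma X_pow_dvd_of_dvd_mul {i j : Fin 3} (hij : i ≠ j) (m n : ℕ) {f : S}
    (h : (X i : S) ^ m ∣ X j ^ n * f) : (X i : S) ^ m ∣ f := by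
  have hp : Prime (X i : S) := X_prime
  refine hp.pow_dvd_of_dvd_mul_left m (fun hd => hij ?_) h
  exact X_dvd_X.mp (hp.dvd_of_dvd_pow hd)

/-- The syzygies of `(x^a y^b, x^a z^c, -2 y^b z^c)` are generated by `(z^c, y^b, x^a)` and
`(z^c, -y^b, 0)`. -/
lemma exists_of_syzygy (a b c : ℕ) (p q r : S)
    (h : p * (X 0 ^ a * X 1 ^ b) + q * (X 0 ^ a * X 2 ^ c) - 2 * r * (X 1 ^ b * X 2 ^ c) = 0) :
    ∃ s t : S, p = s * X 2 ^ c + t * X 2 ^ c ∧ q = s * X 1 ^ b - t * X 1 ^ b ∧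
      r = s * X 0 ^ a := by
  have h2 : (C (1 / 2) : S) * 2 = 1 := by
    rw [show (2 : S) = C 2 from (map_ofNat C 2).symm, ← C_mul]; norm_num
  have hX (i : Fin 3) (n : ℕ) : (X i : S) ^ n ≠ 0 := pow_ne_zero _ (X_ne_zero i)
  obtain ⟨s, rfl⟩ : (X 0 : S) ^ a ∣ r := by
    apply X_pow_dvd_of_dvd_mul (j := 1) (by decide) a b
    apply X_pow_dvd_of_dvd_mul (j := 2) (by decide) a c
    refine ⟨C (1 / 2) * (p * X 1 ^ b + q * X 2 ^ c), ?_⟩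
    linear_combination -(C (1 / 2)) * h - (X 2 ^ c * (X 1 ^ b * r)) * h2
  have h1 : p * X 1 ^ b + q * X 2 ^ c = 2 * s * (X 1 ^ b * X 2 ^ c) := by
    apply mul_left_cancel₀ (hX 0 a)
    linear_combination h
  obtain ⟨t, rfl⟩ : (X 2 : S) ^ c ∣ p := by
    apply X_pow_dvd_of_dvd_mul (j := 1) (by decide) c b
    exact ⟨2 * s * X 1 ^ b - q, by linear_combination h1⟩
  have h3 : q = X 1 ^ b * (2 * s - t) := by
    apply mul_left_cancel₀ (hX 2 c)
    linear_combination h1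
  exact ⟨s, t - s, by ring, by rw [h3]; ring, by ring⟩

/-- The map `S³ → S`, `(p,q,r) ↦ p x^a y^b + q x^a z^c − 2 r y^b z^c` kills
`(z^c, y^b, x^a)`, hence descends to `φ : R(a,b,c) → S`.  The image of `φ` is the ideal
`(x^a y^b, x^a z^c, y^b z^c)`, its kernel is the cyclic submodule generated by the class
of `(z^c, −y^b, 0)`, and this kernel is free of rank one.  In particular there is a
short exact sequence `0 → S → R(a,b,c) → I → 0`. -/
theorem cosection_of_Rabc (a b c : ℕ) (ha : 0 < a) (hb : 0 < b) (hc : 0 < c) :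
    ∀ x y z : S, x = X 0 → y = X 1 → z = X 2 →
    ∀ ψ : (Fin 3 → S) →ₗ[S] S,
      (∀ p : Fin 3 → S,
        ψ p = p 0 * (x ^ a * y ^ b) + p 1 * (x ^ a * z ^ c) - 2 * p 2 * (y ^ b * z ^ c)) →
    ψ ![z ^ c, y ^ b, x ^ a] = 0 ∧
    ∀ (hN : Nsub a b c ≤ LinearMap.ker ψ),
      ∀ φ : Rabc a b c →ₗ[S] S, φ = (Nsub a b c).liftQ ψ hN →
      LinearMap.range φ =
        (Ideal.span {x ^ a * y ^ b, x ^ a * z ^ c, y ^ b * z ^ c} : Ideal S) ∧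
      LinearMap.ker φ =
        Submodule.span S {Submodule.Quotient.mk ![z ^ c, -(y ^ b), 0]} ∧
      Nonempty ((LinearMap.ker φ) ≃ₗ[S] S) ∧
      ∃ ι : S →ₗ[S] Rabc a b c,
        Function.Injective ι ∧ LinearMap.range ι = LinearMap.ker φ := by
  rintro x y z rfl rfl rfl ψ hψ
  have h2 : (C (1 / 2) : S) * 2 = 1 := by
    rw [show (2 : S) = C 2 from (map_ofNat C 2).symm, ← C_mul]; norm_num
  have hX (i : Fin 3) (n : ℕ) : (X i : S) ^ n ≠ 0 := pow_ne_zero _ (X_ne_zero i)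
  refine ⟨by rw [hψ]; simp; ring, ?_⟩
  rintro hN φ rfl
  set v : Fin 3 → S := ![X 2 ^ c, -(X 1 ^ b), 0] with hv
  set w : Rabc a b c := Submodule.Quotient.mk v with hw
  have hker : LinearMap.ker ((Nsub a b c).liftQ ψ hN) = Submodule.span S {w} := by
    apply le_antisymm
    · intro u hu
      obtain ⟨p, rfl⟩ := Submodule.Quotient.mk_surjective _ u
      rw [LinearMap.mem_ker, Submodule.liftQ_apply, hψ] at hu
      obtain ⟨s, t, h0, h1, h2⟩ := exists_of_syzygy a b c _ _ _ hu
      refine Submodule.mem_span_singleton.mpr ⟨t, ?_⟩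
      rw [hw, ← Submodule.Quotient.mk_smul, eq_comm, Submodule.Quotient.eq]
      refine Submodule.mem_span_singleton.mpr ⟨s, ?_⟩
      ext1 i
      fin_cases i <;> simp [hv, h0, h1, h2]
    · rw [Submodule.span_singleton_le_iff_mem, LinearMap.mem_ker, hw, Submodule.liftQ_apply, hψ]
      simp [hv]
      ring
  have hinj : Function.Injective (LinearMap.toSpanSingleton S (Rabc a b c) w) := by
    rw [injective_iff_map_eq_zero]
    intro f hf
    rw [LinearMap.toSpanSingleton_apply, hw, ← Submodule.Quotient.mk_smul,
      Submodule.Quotient.mk_eq_zero] at hf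
    obtain ⟨g, hg⟩ := Submodule.mem_span_singleton.mp hf
    have hg2 : g = 0 := by
      have := congrFun hg 2
      simpa [hv, hX] using this
    have hg0 := congrFun hg 0
    simpa [hv, hg2, hX, eq_comm] using hg0
  have hrange : LinearMap.range (LinearMap.toSpanSingleton S (Rabc a b c) w) =
      LinearMap.ker ((Nsub a b c).liftQ ψ hN) := by
    rw [hker, LinearMap.range_toSpanSingleton]
  refine ⟨?_, hker, ⟨?_⟩, _, hinj, hrange⟩
  · rw [Submodule.range_liftQ]
    apply le_antisymm
    · rintro _ ⟨p, rfl⟩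
      rw [hψ]
      refine sub_mem (add_mem ?_ ?_) ?_ <;>
        exact Ideal.mul_mem_left _ _ (Ideal.subset_span (by simp))
    · refine Ideal.span_le.mpr ?_
      rintro _ (rfl | rfl | rfl)
      · exact ⟨![1, 0, 0], by rw [hψ]; simp⟩
      · exact ⟨![0, 1, 0], by rw [hψ]; simp⟩
      · refine ⟨![0, 0, -C (1 / 2)], ?_⟩
        rw [hψ]
        simp only [Matrix.cons_val]
        linear_combination (X 1 ^ b * X 2 ^ c) * h2
  · exact ((LinearEquiv.ofInjective _ hinj).trans (LinearEquiv.ofEq _ _ hrange)).symm
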